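/- Suppose every vertex of G has degree at most 6. Then the second moment of the number of collisions of two independent simple random walks on G killed upon exiting B, both started at 0, satisfies E_{0,0}(Z_B²) ≤ 6 R_eff(0, V∖B) + 72 R_eff(0, V∖B) · max_{x∈B} R_eff(x, V∖B). -/

import Mathlib

open MeasureTheory ENNReal
open scoped Classical

noncomputable section

variable {V : Type*}

/-- The cemetery-extended state space `B ∪ {†}` carries the discrete σ-algebra. -/
instance : MeasurableSpace (Option V) := ⊤

/-- One-step transition probabilities of the simple random walk on `G` killed
upon exiting `B`; the cemetery state `†` is `none`. -/
def killedStep (G : SimpleGraph V) [G.LocallyFinite] (B : Set V) :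
    Option V → Option V → ℝ≥0∞
  | some x, some y =>
      if x ∈ B ∧ G.Adj x y ∧ y ∈ B then ((G.degree x : ℝ≥0∞))⁻¹ else 0
  | some x, none =>
      if x ∈ B then
        (((G.neighborFinset x).filter (fun y => y ∉ B)).card : ℝ≥0∞) / (G.degree x : ℝ≥0∞)
      else 1
  | none, some _ => 0
  | none, none => 1

/-- Probability that the killed walk started at `a` follows `w` for its first `n` steps. -/
def killedCylProb (G : SimpleGraph V) [G.LocallyFinite] (B : Set V) (a : V)
    {n : ℕ} (w : Fin (n + 1) → Option V) : ℝ≥0∞ :=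
  (if w 0 = some a then 1 else 0) *
    ∏ i : Fin n, killedStep G B (w i.castSucc) (w i.succ)

/-- `μ` is the law of the simple random walk on `G` killed upon exiting `B`, started at `a`:
it is a probability measure on trajectories with the correct finite-dimensional
distributions. -/
def IsKilledWalkLaw (G : SimpleGraph V) [G.LocallyFinite] (B : Set V)
    (a : V) (μ : Measure (ℕ → Option V)) : Prop :=
  IsProbabilityMeasure μ ∧
    ∀ (n : ℕ) (w : Fin (n + 1) → Option V),
      μ {ω | ∀ i : Fin (n + 1), ω i = w i} = killedCylProb G B a w

/-- `ν` is the joint law of two independent killed walks started at `a` and `b`. -/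
def IsKilledPairLaw (G : SimpleGraph V) [G.LocallyFinite] (B : Set V)
    (a b : V) (ν : Measure (ℕ → Option V × Option V)) : Prop :=
  IsProbabilityMeasure ν ∧
    ∀ (n : ℕ) (w : Fin (n + 1) → Option V × Option V),
      ν {ω | ∀ i : Fin (n + 1), ω i = w i} =
        killedCylProb G B a (fun i => (w i).1) * killedCylProb G B b (fun i => (w i).2)

/-- The number of collisions `Z_B = Σ_{n ≥ 0} 1(Xₙ = Yₙ ∈ B)` of the two coordinate
walks along a trajectory. -/
def collisions (B : Set V) (ω : ℕ → Option V × Option V) : ℝ≥0∞ :=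
  ∑' n : ℕ, if ∃ x ∈ B, (ω n).1 = some x ∧ (ω n).2 = some x then 1 else 0

/-- The Dirichlet energy `ℰ(f,f) = (1/2) Σ_{x∼y} (f x - f y)²` of `f : V → ℝ`. -/
def energy (G : SimpleGraph V) (f : V → ℝ) : ℝ≥0∞ :=
  (1 / 2) * ∑' p : V × V,
    if G.Adj p.1 p.2 then ENNReal.ofReal ((f p.1 - f p.2) ^ 2) else 0

/-- The effective resistance between `A₁` and `A₂` in `G`, every edge being a unit
resistor: its inverse is the infimum of the energies of finite-energy functions
that are `1` on `A₁` and `0` on `A₂`. -/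
def effRes (G : SimpleGraph V) (A₁ A₂ : Set V) : ℝ≥0∞ :=
  (⨅ f ∈ {f : V → ℝ | energy G f ≠ ⊤ ∧ (∀ x ∈ A₁, f x = 1) ∧ ∀ x ∈ A₂, f x = 0},
    energy G f)⁻¹

/-!
Expanding the square, `Z_B²` is at most twice the number of pairs of collision times `n ≤ m`, so by
the Markov property `E(Z_B²) ≤ 2 U(0) sup_{x ∈ B} U(x)`. Here `U(x) = Σ_n Σ_{y ∈ B} p_n(x, y)²` is
the expected number of collisions of two walks started at `x`, and `p_n` denotes the `n`-step
transition probabilities of the killed walk. If all degrees are at most `d`, then reversibility,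
`deg(x) p_n(x, y) = deg(y) p_n(y, x)`, gives `deg(x) U(x) ≤ d Σ_n p_{2n}(x, x)`. Finally
`Σ_n p_n(x, x) ≤ deg(x) R_eff(x, V∖B)` by Dirichlet's principle: the function
`f = Σ_{n ≤ N} p_n(·, x)` vanishes off `B` and its Laplacian is at most `deg(x)` at `x` and at most
`0` elsewhere on `B`, so `ℰ(f, f) = Σ f Δf ≤ deg(x) f(x)`. The truncation at `N` makes the support
of `f` finite even when `B` is infinite.
-/

section StepProb

variable {S T : Type*}

/-- The `n`-step transition probabilities of the chain with one-step transition probabilities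
`P`. The rows of `P` need not sum to `1`. -/
def stepProb (P : S → S → ℝ≥0∞) : ℕ → S → S → ℝ≥0∞
  | 0, s, t => if s = t then 1 else 0
  | n + 1, s, t => ∑' u, P s u * stepProb P n u t

theorem stepProb_add (P : S → S → ℝ≥0∞) (m n : ℕ) (s t : S) :
    stepProb P (m + n) s t = ∑' u, stepProb P m s u * stepProb P n u t := by
  induction m generalizing s with
  | zero => simp [stepProb]
  | succ m ih =>
    simp only [Nat.succ_add, stepProb, ih, ← ENNReal.tsum_mul_left, ← ENNReal.tsum_mul_right]
    rw [ENNReal.tsum_comm]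
    simp only [mul_assoc]

theorem stepProb_succ' (P : S → S → ℝ≥0∞) (n : ℕ) (s t : S) :
    stepProb P (n + 1) s t = ∑' u, stepProb P n s u * P u t := by
  rw [stepProb_add]
  simp [stepProb]

theorem stepProb_le_one {P : S → S → ℝ≥0∞} (hP : ∀ s, ∑' t, P s t ≤ 1) (n : ℕ) (s t : S) :
    stepProb P n s t ≤ 1 := by
  induction n generalizing s with
  | zero => unfold stepProb; split_ifs <;> simp
  | succ n ih =>
    calc ∑' u, P s u * stepProb P n u t ≤ ∑' u, P s u * 1 := by gcongr with u; exact ih u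
      _ ≤ 1 := by simpa using hP s

theorem mul_stepProb_comm_of_reversible {P : S → S → ℝ≥0∞} {m : S → ℝ≥0∞}
    (hrev : ∀ s t, m s * P s t = m t * P t s) (n : ℕ) (s t : S) :
    m s * stepProb P n s t = m t * stepProb P n t s := by
  induction n generalizing s with
  | zero =>
    by_cases h : s = t
    · rw [h]
    · simp [stepProb, h, Ne.symm h]
  | succ n ih =>
    rw [stepProb_succ' P n t s, stepProb, ← ENNReal.tsum_mul_left, ← ENNReal.tsum_mul_left]
    refine tsum_congr fun u => ?_
    rw [← mul_assoc, hrev, mul_right_comm, ih, mul_assoc]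

theorem mul_tsum_stepProb_sq_le_of_reversible {P : S → S → ℝ≥0∞} {m : S → ℝ≥0∞}
    (hrev : ∀ s t, m s * P s t = m t * P t s) {D : Set S} {c : ℝ≥0∞} (hm : ∀ t ∈ D, m t ≤ c)
    (n : ℕ) (s : S) :
    m s * ∑' t : D, stepProb P n s t ^ 2 ≤ c * stepProb P (n + n) s s := by
  rw [stepProb_add, ← ENNReal.tsum_mul_left, ← ENNReal.tsum_mul_left]
  calc ∑' t : D, m s * stepProb P n s t ^ 2
      = ∑' t : D, m t * (stepProb P n s t * stepProb P n t s) := by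
        refine tsum_congr fun t => ?_
        rw [sq, ← mul_assoc, mul_stepProb_comm_of_reversible hrev, mul_assoc,
          mul_comm (stepProb P n t s)]
    _ ≤ ∑' t : D, c * (stepProb P n s t * stepProb P n t s) := by
        gcongr with t; exact hm t t.2
    _ ≤ ∑' t, c * (stepProb P n s t * stepProb P n t s) :=
        ENNReal.tsum_comp_le_tsum_of_injective Subtype.val_injective _

theorem stepProb_comp_of_injective {P : T → T → ℝ≥0∞} {ι : S → T} (hι : ι.Injective)
    (hP : ∀ u ∉ Set.range ι, ∀ t, P u (ι t) = 0) (n : ℕ) (s t : S) :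
    stepProb P n (ι s) (ι t) = stepProb (fun x y => P (ι x) (ι y)) n s t := by
  have h_range (n : ℕ) (u : T) (hu : u ∉ Set.range ι) : stepProb P n u (ι t) = 0 := by
    induction n generalizing u with
    | zero => exact if_neg fun h => hu ⟨t, h.symm⟩
    | succ n ih =>
      refine ENNReal.tsum_eq_zero.2 fun v => ?_
      by_cases hv : v ∈ Set.range ι
      · obtain ⟨x, rfl⟩ := hv
        rw [hP u hu x, zero_mul]
      · rw [ih v hv, mul_zero]
  induction n generalizing s with
  | zero => simp [stepProb, hι.eq_iff]
  | succ n ih =>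
    rw [stepProb, stepProb, ← hι.tsum_eq]
    · simp only [ih]
    · rw [Function.support_subset_iff']
      exact fun u hu => by rw [h_range n u hu, mul_zero]

/-- One-step transition probabilities of two chains moving independently. -/
def prodStep (P : S → S → ℝ≥0∞) (Q : T → T → ℝ≥0∞) (s t : S × T) : ℝ≥0∞ :=
  P s.1 t.1 * Q s.2 t.2

theorem stepProb_prodStep (P : S → S → ℝ≥0∞) (Q : T → T → ℝ≥0∞) (n : ℕ) (s t : S × T) :
    stepProb (prodStep P Q) n s t = stepProb P n s.1 t.1 * stepProb Q n s.2 t.2 := by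
  induction n generalizing s with
  | zero => simp [stepProb, Prod.ext_iff, ← ite_and, and_comm]
  | succ n ih =>
    simp only [stepProb, prodStep, ih, ENNReal.tsum_prod', ← ENNReal.tsum_mul_right]
    simp only [← ENNReal.tsum_mul_left]
    refine tsum_congr fun u => tsum_congr fun v => ?_
    ring

/-- Expected number of visits to `D` of the chain with transition probabilities `P` started
at `s`. -/
def expectedVisits (P : S → S → ℝ≥0∞) (D : Set S) (s : S) : ℝ≥0∞ :=
  ∑' n, ∑' t : D, stepProb P n s t

end StepProb

section MarkovChain

variable {S : Type*} [MeasurableSpace S] [Countable S] [MeasurableSingletonClass S]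
  {P : S → S → ℝ≥0∞} {a : S} {ν : Measure (ℕ → S)}

/-- `ν` is the law of the Markov chain with transition probabilities `P` started at `a`, encoded
through its finite-dimensional distributions. -/
def IsChainLaw {S : Type*} [MeasurableSpace S] (P : S → S → ℝ≥0∞) (a : S)
    (ν : Measure (ℕ → S)) : Prop :=
  ∀ (n : ℕ) (w : Fin (n + 1) → S), ν {ω | ∀ i : Fin (n + 1), ω i = w i} =
    (if w 0 = a then 1 else 0) * ∏ i : Fin n, P (w i.castSucc) (w i.succ)

/-- The number of times at which the trajectory `ω` is in `D`. -/
def visits {S : Type*} (D : Set S) (ω : ℕ → S) : ℝ≥0∞ := ∑' n, D.indicator 1 (ω n)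

theorem measure_preimage_inter_eq_tsum {Ω : Type*} [MeasurableSpace Ω] (μ : Measure Ω)
    {f : Ω → S} (hf : Measurable f) (D : Set S) (A : Set Ω) :
    μ (f ⁻¹' D ∩ A) = ∑' s : D, μ (f ⁻¹' {↑s} ∩ A) := by
  have h_meas (E : Set S) : MeasurableSet (f ⁻¹' E) := hf E.to_countable.measurableSet
  have h := tsum_measure_preimage_singleton (μ := μ.restrict A) D.to_countable (f := f)
    fun s _ => h_meas {s}
  simpa only [Measure.restrict_apply (h_meas _)] using h.symm

theorem measure_eq_tsum_inter_preimage {Ω : Type*} [MeasurableSpace Ω] (μ : Measure Ω)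
    {f : Ω → S} (hf : Measurable f) (A : Set Ω) :
    μ A = ∑' s, μ (f ⁻¹' {s} ∩ A) := by
  rw [← tsum_univ fun s => μ (f ⁻¹' {s} ∩ A), ← measure_preimage_inter_eq_tsum μ hf,
    Set.preimage_univ, Set.univ_inter]

theorem setOf_cylinder_snoc {S : Type*} (n : ℕ) (w : Fin (n + 1) → S) (u : S) :
    {ω : ℕ → S | ∀ i : Fin (n + 2), ω i = (Fin.snoc w u : Fin (n + 2) → S) i} =
      {ω | ω (n + 1) = u} ∩ {ω | ∀ i : Fin (n + 1), ω i = w i} := by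
  ext ω
  simp [Fin.forall_fin_succ' (n := n + 1), and_comm]

theorem IsChainLaw.measure_cylinder_snoc {S : Type*} [MeasurableSpace S] {P : S → S → ℝ≥0∞}
    {a : S} {ν : Measure (ℕ → S)} (hν : IsChainLaw P a ν)
    (n : ℕ) (w : Fin (n + 1) → S) (u : S) :
    ν {ω | ∀ i : Fin (n + 2), ω i = (Fin.snoc w u : Fin (n + 2) → S) i} =
      ν {ω | ∀ i : Fin (n + 1), ω i = w i} * P (w (Fin.last n)) u := by
  rw [hν, hν, Fin.prod_univ_castSucc, ← mul_assoc, ← Fin.castSucc_zero]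
  simp only [← Fin.castSucc_succ, Fin.snoc_castSucc, Fin.succ_last, Fin.snoc_last]

theorem IsChainLaw.measure_inter_cylinder (hν : IsChainLaw P a ν) (k n : ℕ)
    (w : Fin (n + 1) → S) (t : S) :
    ν ({ω | ω (n + k) = t} ∩ {ω | ∀ i : Fin (n + 1), ω i = w i}) =
      ν {ω | ∀ i : Fin (n + 1), ω i = w i} * stepProb P k (w (Fin.last n)) t := by
  induction k generalizing n with
  | zero =>
    by_cases h : w (Fin.last n) = t
    · rw [Set.inter_eq_self_of_subset_right fun ω hω => (hω (Fin.last n)).trans h]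
      simp [stepProb, h]
    · have h_disj : {ω : ℕ → S | ω (n + 0) = t} ∩ {ω | ∀ i : Fin (n + 1), ω i = w i} = ∅ :=
        Set.eq_empty_of_forall_notMem fun ω hω => h ((hω.2 (Fin.last n)).symm.trans hω.1)
      rw [h_disj, measure_empty, stepProb, if_neg h, mul_zero]
  | succ k ih =>
    rw [measure_eq_tsum_inter_preimage ν (measurable_pi_apply (n + 1)), stepProb,
      ← ENNReal.tsum_mul_left]
    refine tsum_congr fun u => ?_
    have h_step := ih (n + 1) (Fin.snoc w u)
    rw [Fin.snoc_last, hν.measure_cylinder_snoc, setOf_cylinder_snoc, Set.inter_left_comm,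
      Nat.add_right_comm] at h_step
    rw [← mul_assoc, ← h_step]
    rfl

theorem IsChainLaw.measure_coord_eq (hν : IsChainLaw P a ν) (n : ℕ) (s : S) :
    ν {ω | ω n = s} = stepProb P n a s := by
  have h_start (u : S) : ν ({ω | ω 0 = u} ∩ {ω | ω n = s}) =
      if u = a then stepProb P n u s else 0 := by
    have h := hν.measure_inter_cylinder n 0 (fun _ => u) s
    rw [hν] at h
    simpa [Set.inter_comm] using h
  calc ν {ω | ω n = s} = ∑' u, ν ({ω | ω 0 = u} ∩ {ω | ω n = s}) :=
        measure_eq_tsum_inter_preimage ν (measurable_pi_apply 0) _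
    _ = stepProb P n a s := by simp only [h_start, tsum_ite_eq]

theorem IsChainLaw.measure_coord_eq_inter (hν : IsChainLaw P a ν) (n k : ℕ) (s t : S) :
    ν ({ω | ω n = s} ∩ {ω | ω (n + k) = t}) = stepProb P n a s * stepProb P k s t := by
  let past (ω : ℕ → S) (i : Fin (n + 1)) : S := ω i
  have h_past (w : Fin (n + 1) → S) : past ⁻¹' {w} = {ω | ∀ i : Fin (n + 1), ω i = w i} := by
    ext ω
    simp [past, funext_iff]
  have h_meas : Measurable past := measurable_pi_lambda _ fun i => measurable_pi_apply _
  rw [← hν.measure_coord_eq, measure_eq_tsum_inter_preimage ν h_meas,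
    measure_eq_tsum_inter_preimage ν h_meas {ω | ω n = s}, ← ENNReal.tsum_mul_right]
  refine tsum_congr fun w => ?_
  rw [h_past]
  by_cases hw : w (Fin.last n) = s
  · have h_sub : {ω : ℕ → S | ∀ i : Fin (n + 1), ω i = w i} ⊆ {ω | ω n = s} :=
      fun ω hω => (hω (Fin.last n)).trans hw
    rw [← Set.inter_assoc, Set.inter_eq_self_of_subset_left h_sub, Set.inter_comm,
      hν.measure_inter_cylinder, hw]
  · have h_disj : {ω : ℕ → S | ∀ i : Fin (n + 1), ω i = w i} ∩ {ω | ω n = s} = ∅ :=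
      Set.eq_empty_of_forall_notMem fun ω hω => hw ((hω.1 (Fin.last n)).symm.trans hω.2)
    rw [← Set.inter_assoc, h_disj, Set.empty_inter, measure_empty, zero_mul]

theorem IsChainLaw.measure_coord_mem_inter (hν : IsChainLaw P a ν) (D : Set S) (n k : ℕ) :
    ν ({ω | ω n ∈ D} ∩ {ω | ω (n + k) ∈ D}) =
      ∑' s : D, stepProb P n a s * ∑' t : D, stepProb P k s t := by
  calc ν ({ω | ω n ∈ D} ∩ {ω | ω (n + k) ∈ D})
      = ∑' s : D, ν ({ω | ω n = s} ∩ {ω | ω (n + k) ∈ D}) :=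
        measure_preimage_inter_eq_tsum ν (measurable_pi_apply n) D _
    _ = ∑' s : D, ∑' t : D, ν ({ω | ω (n + k) = t} ∩ {ω | ω n = s}) := by
        refine tsum_congr fun s => ?_
        rw [Set.inter_comm]
        exact measure_preimage_inter_eq_tsum ν (measurable_pi_apply (n + k)) D _
    _ = ∑' s : D, stepProb P n a s * ∑' t : D, stepProb P k s t := by
        simp only [Set.inter_comm {ω : ℕ → S | ω (n + k) = _}, hν.measure_coord_eq_inter,
          ENNReal.tsum_mul_left]

/-- Expand the square and bound the diagonal terms by counting them twice. -/
theorem tsum_sq_le_two_mul_tsum_tsum_add (a : ℕ → ℝ≥0∞) :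
    (∑' n, a n) ^ 2 ≤ 2 * ∑' n, ∑' k, a n * a (n + k) := by
  have h_shift (n : ℕ) : ∑' m, (if n ≤ m then a n * a m else 0) = ∑' k, a n * a (n + k) := by
    rw [← (add_right_injective n).tsum_eq]
    · simp
    · intro m hm
      exact le_iff_exists_add.1 (of_not_not fun h => hm (if_neg h)) |>.imp fun _ => Eq.symm
  have h_split (n m : ℕ) : a n * a m ≤
      (if n ≤ m then a n * a m else 0) + (if m ≤ n then a m * a n else 0) := by
    rcases le_total n m with h | h
    · simp [h]
    · simp [h, mul_comm]
  calc (∑' n, a n) ^ 2 = ∑' n, ∑' m, a n * a m := by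
        simp only [sq, ENNReal.tsum_mul_left, ENNReal.tsum_mul_right]
    _ ≤ ∑' n, ∑' m, ((if n ≤ m then a n * a m else 0) + (if m ≤ n then a m * a n else 0)) := by
        gcongr with n m; exact h_split n m
    _ = 2 * ∑' n, ∑' k, a n * a (n + k) := by
        simp only [ENNReal.tsum_add]
        rw [ENNReal.tsum_comm (f := fun n m => if m ≤ n then a m * a n else 0)]
        simp only [h_shift, two_mul]

theorem IsChainLaw.lintegral_visits_sq_le (hν : IsChainLaw P a ν) (D : Set S) :
    ∫⁻ ω, visits D ω ^ 2 ∂ν ≤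
      2 * (expectedVisits P D a * ⨆ s ∈ D, expectedVisits P D s) := by
  have h_meas : Measurable (D.indicator (1 : S → ℝ≥0∞)) := .of_discrete
  have h_meas_mul (n k : ℕ) :
      Measurable fun ω : ℕ → S => D.indicator (1 : S → ℝ≥0∞) (ω n) * D.indicator 1 (ω (n + k)) :=
    (h_meas.comp (measurable_pi_apply n)).mul (h_meas.comp (measurable_pi_apply (n + k)))
  have h_meas_mem (n : ℕ) : MeasurableSet {ω : ℕ → S | ω n ∈ D} :=
    measurable_pi_apply n D.to_countable.measurableSet
  have h_pair (n k : ℕ) : ∫⁻ ω, D.indicator 1 (ω n) * D.indicator 1 (ω (n + k)) ∂ν =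
      ∑' s : D, stepProb P n a s * ∑' t : D, stepProb P k s t := by
    rw [← hν.measure_coord_mem_inter,
      ← lintegral_indicator_one ((h_meas_mem n).inter (h_meas_mem (n + k))),
      Set.inter_indicator_one]
    rfl
  calc ∫⁻ ω, visits D ω ^ 2 ∂ν
      ≤ ∫⁻ ω, 2 * ∑' n, ∑' k, D.indicator 1 (ω n) * D.indicator 1 (ω (n + k)) ∂ν :=
        lintegral_mono fun ω => tsum_sq_le_two_mul_tsum_tsum_add _
    _ = 2 * ∑' n, ∑' k, ∑' s : D, stepProb P n a s * ∑' t : D, stepProb P k s t := by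
        rw [lintegral_const_mul _ (by fun_prop), lintegral_tsum (by fun_prop)]
        simp only [lintegral_tsum fun k => (h_meas_mul _ k).aemeasurable, h_pair]
    _ = 2 * ∑' n, ∑' s : D, stepProb P n a s * expectedVisits P D s := by
        congr! 3 with n
        rw [ENNReal.tsum_comm]
        simp only [ENNReal.tsum_mul_left, expectedVisits]
    _ ≤ 2 * ∑' n, ∑' s : D, stepProb P n a s * ⨆ s ∈ D, expectedVisits P D s := by
        gcongr with n s
        exact le_iSup₂ (f := fun s (_ : s ∈ D) => expectedVisits P D s) s.1 s.2
    _ = 2 * (expectedVisits P D a * ⨆ s ∈ D, expectedVisits P D s) := by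
        simp only [ENNReal.tsum_mul_right, expectedVisits]

end MarkovChain

theorem countable_of_connected (G : SimpleGraph V) [G.LocallyFinite] (hG : G.Connected) :
    Countable V := by
  obtain ⟨o⟩ := hG.nonempty
  have h_sphere (n : ℕ) : {y : V | ∃ p : G.Walk y o, p.length = n}.Finite := by
    induction n with
    | zero =>
      refine (Set.finite_singleton o).subset ?_
      rintro y ⟨p, hp⟩
      exact SimpleGraph.Walk.eq_of_length_eq_zero hp
    | succ n ih =>
      refine (ih.biUnion fun z _ => (G.neighborFinset z).finite_toSet).subset ?_
      rintro y ⟨_ | ⟨h, q⟩, hp⟩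
      · simp at hp
      · exact Set.mem_biUnion ⟨q, by simpa using hp⟩ (by simpa using h.symm)
  refine Set.countable_univ_iff.1
    ((Set.countable_iUnion fun n => (h_sphere n).countable).mono fun y _ => ?_)
  obtain ⟨p⟩ := hG.preconnected y o
  exact Set.mem_iUnion.2 ⟨p.length, p, rfl⟩

section Network

variable (G : SimpleGraph V)

theorem energy_smul (c : ℝ) (f : V → ℝ) :
    energy G (c • f) = ENNReal.ofReal (c ^ 2) * energy G f := by
  simp only [energy, mul_left_comm (ENNReal.ofReal _),
    ← ENNReal.tsum_mul_left (a := ENNReal.ofReal _), mul_ite, mul_zero,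
    ← ENNReal.ofReal_mul (sq_nonneg c), ← mul_pow, mul_sub, Pi.smul_apply, smul_eq_mul]

theorem div_energy_le_effRes {A₁ A₂ : Set V} {f : V → ℝ} {c : ℝ} (hc : c ≠ 0)
    (h₁ : ∀ x ∈ A₁, f x = c) (h₂ : ∀ x ∈ A₂, f x = 0) (hf : energy G f ≠ ⊤) :
    ENNReal.ofReal (c ^ 2) / energy G f ≤ effRes G A₁ A₂ := by
  have h_sq : 0 < c ^ 2 := by positivity
  have h_energy : energy G (c⁻¹ • f) = energy G f / ENNReal.ofReal (c ^ 2) := by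
    rw [energy_smul, inv_pow, ENNReal.ofReal_inv_of_pos h_sq, mul_comm, div_eq_mul_inv]
  have h_ne : ENNReal.ofReal (c ^ 2) ≠ 0 := (ENNReal.ofReal_pos.2 h_sq).ne'
  rw [effRes, ENNReal.le_inv_iff_le_inv, ENNReal.inv_div (.inr ENNReal.ofReal_ne_top) (.inr h_ne),
    ← h_energy]
  refine iInf₂_le _ ⟨?_, fun x hx => ?_, fun x hx => ?_⟩
  · rw [h_energy]
    exact ENNReal.div_ne_top hf h_ne
  · simp [h₁ x hx, hc]
  · simp [h₂ x hx]

theorem energy_eq_ofReal_half_sum {f : V → ℝ} {T : Finset V}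
    (hT : ∀ x y, G.Adj x y → f x ≠ 0 → x ∈ T ∧ y ∈ T) :
    energy G f =
      ENNReal.ofReal (1 / 2 * ∑ x ∈ T, ∑ y ∈ T, if G.Adj x y then (f x - f y) ^ 2 else 0) := by
  have h_zero (p : V × V) (hp : p ∉ T ×ˢ T) :
      (if G.Adj p.1 p.2 then ENNReal.ofReal ((f p.1 - f p.2) ^ 2) else 0) = 0 := by
    refine ite_eq_right_iff.2 fun h => ?_
    have h₁ : f p.1 = 0 := of_not_not fun hf => hp (Finset.mem_product.2 (hT _ _ h hf))
    have h₂ : f p.2 = 0 :=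
      of_not_not fun hf => hp (Finset.mem_product.2 (hT _ _ h.symm hf).symm)
    simp [h₁, h₂]
  rw [energy, tsum_eq_sum h_zero, ← Finset.sum_product', ENNReal.ofReal_mul (by norm_num),
    ENNReal.ofReal_sum_of_nonneg fun p _ => by positivity]
  congr 1
  · simp
  · refine Finset.sum_congr rfl fun p _ => ?_
    split_ifs <;> simp

theorem half_sum_adj_sq_sub (f : V → ℝ) (T : Finset V) :
    1 / 2 * ∑ x ∈ T, ∑ y ∈ T, (if G.Adj x y then (f x - f y) ^ 2 else 0) =
      ∑ x ∈ T, ∑ y ∈ T, if G.Adj x y then f x * (f x - f y) else 0 := by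
  have h_swap : ∑ x ∈ T, ∑ y ∈ T, (if G.Adj x y then f x * (f x - f y) else 0) =
      ∑ x ∈ T, ∑ y ∈ T, if G.Adj x y then f y * (f y - f x) else 0 := by
    rw [Finset.sum_comm]
    simp only [G.adj_comm]
  have h_add : ∑ x ∈ T, ∑ y ∈ T, (if G.Adj x y then (f x - f y) ^ 2 else 0) =
      ∑ x ∈ T, ∑ y ∈ T, (if G.Adj x y then f x * (f x - f y) else 0) +
        ∑ x ∈ T, ∑ y ∈ T, if G.Adj x y then f y * (f y - f x) else 0 := by
    simp only [← Finset.sum_add_distrib]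
    refine Finset.sum_congr rfl fun x _ => Finset.sum_congr rfl fun y _ => ?_
    split_ifs <;> ring
  rw [h_add, ← h_swap]
  ring

variable [G.LocallyFinite]

/-- The graph Laplacian of `f`, normalised to be nonnegative at a maximum of `f`. -/
def graphLaplacian (f : V → ℝ) (x : V) : ℝ := ∑ y ∈ G.neighborFinset x, (f x - f y)

theorem graphLaplacian_eq_degree_mul_sub (f : V → ℝ) (x : V) :
    graphLaplacian G f x = G.degree x * f x - ∑ y ∈ G.neighborFinset x, f y := by
  simp [graphLaplacian, Finset.sum_sub_distrib]

theorem energy_eq_ofReal_sum_mul_graphLaplacian {f : V → ℝ} {s : Finset V}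
    (hs : f.support ⊆ s) :
    energy G f = ENNReal.ofReal (∑ x ∈ s, f x * graphLaplacian G f x) := by
  have h_mem {x : V} (hx : f x ≠ 0) : x ∈ s := hs hx
  set T := s ∪ s.biUnion fun x => G.neighborFinset x
  have h_sub {x : V} (hx : x ∈ s) : G.neighborFinset x ⊆ T :=
    (Finset.subset_biUnion_of_mem (fun x => G.neighborFinset x) hx).trans Finset.subset_union_right
  have h_row {x : V} (hx : x ∈ s) :
      ∑ y ∈ T, (if G.Adj x y then f x * (f x - f y) else 0) = f x * graphLaplacian G f x := by
    rw [graphLaplacian, Finset.mul_sum, ← Finset.sum_filter]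
    congr 1
    ext y
    simpa using fun h => h_sub hx ((G.mem_neighborFinset x y).2 h)
  rw [energy_eq_ofReal_half_sum G (T := T) fun x y h hx =>
      ⟨Finset.subset_union_left (h_mem hx), h_sub (h_mem hx) (by simpa using h)⟩,
    half_sum_adj_sq_sub, ← Finset.sum_subset Finset.subset_union_left]
  · rw [Finset.sum_congr rfl fun x hx => h_row hx]
  · intro x _ hx
    simp [of_not_not (mt h_mem hx)]

theorem energy_le_of_graphLaplacian_le {f : V → ℝ} (hf : f.support.Finite) (hf₀ : 0 ≤ f)
    {x : V} {c : ℝ} (hx : f x ≠ 0)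
    (hc : ∀ y, f y ≠ 0 → graphLaplacian G f y ≤ if y = x then c else 0) :
    energy G f ≤ ENNReal.ofReal (c * f x) := by
  rw [energy_eq_ofReal_sum_mul_graphLaplacian G hf.coe_toFinset.ge]
  refine ENNReal.ofReal_le_ofReal ?_
  calc ∑ y ∈ hf.toFinset, f y * graphLaplacian G f y
      ≤ ∑ y ∈ hf.toFinset, f y * if y = x then c else 0 := by
        gcongr with y hy
        · exact hf₀ y
        · exact hc y (by simpa using hy)
    _ = c * f x := by simp [hx, mul_comm]

theorem div_le_effRes_of_graphLaplacian_le {f : V → ℝ} (hf : f.support.Finite) (hf₀ : 0 ≤ f)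
    {x : V} {A : Set V} {c : ℝ} (hx : 0 < f x) (hA : ∀ y ∈ A, f y = 0) (hc₀ : 0 < c)
    (hc : ∀ y, f y ≠ 0 → graphLaplacian G f y ≤ if y = x then c else 0) :
    ENNReal.ofReal (f x / c) ≤ effRes G {x} A := by
  have h_energy := energy_le_of_graphLaplacian_le G hf hf₀ hx.ne' hc
  calc ENNReal.ofReal (f x / c) = ENNReal.ofReal (f x ^ 2) / ENNReal.ofReal (c * f x) := by
        rw [← ENNReal.ofReal_div_of_pos (by positivity)]
        congr 1
        field_simp
    _ ≤ ENNReal.ofReal (f x ^ 2) / energy G f := by gcongr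
    _ ≤ effRes G {x} A := div_energy_le_effRes G hx.ne' (by simp) hA
        (ne_top_of_le_ne_top ENNReal.ofReal_ne_top h_energy)

end Network

section KilledWalk

variable (G : SimpleGraph V) [G.LocallyFinite] (B : Set V)

/-- Transition probabilities of the killed walk between vertices. The mass lost to the cemetery
state is dropped, so that the rows may have total mass less than `1`. -/
def killedTransition (x y : V) : ℝ≥0∞ := killedStep G B (some x) (some y)

theorem stepProb_killedStep_some (n : ℕ) (x y : V) :
    stepProb (killedStep G B) n (some x) (some y) = stepProb (killedTransition G B) n x y := by
  refine stepProb_comp_of_injective (Option.some_injective V) (fun u hu y => ?_) n x y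
  cases u with
  | none => rfl
  | some x => exact absurd ⟨x, rfl⟩ hu

theorem degree_mul_killedTransition_comm (x y : V) :
    G.degree x * killedTransition G B x y = G.degree y * killedTransition G B y x := by
  by_cases h : x ∈ B ∧ G.Adj x y ∧ y ∈ B
  · have h' : y ∈ B ∧ G.Adj y x ∧ x ∈ B := ⟨h.2.2, h.2.1.symm, h.1⟩
    have hx := h.2.1.degree_pos_left
    have hy := h.2.1.degree_pos_right
    simp only [killedTransition, killedStep, if_pos h, if_pos h']
    rw [ENNReal.mul_inv_cancel (by simpa using hx.ne') (by simp),
      ENNReal.mul_inv_cancel (by simpa using hy.ne') (by simp)]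
  · have h' : ¬(y ∈ B ∧ G.Adj y x ∧ x ∈ B) := fun h' => h ⟨h'.2.2, h'.2.1.symm, h'.1⟩
    simp only [killedTransition, killedStep, if_neg h, if_neg h', mul_zero]

variable {G B}

theorem tsum_killedTransition_mul_eq {x : V} (hx : x ∈ B) {h : V → ℝ≥0∞}
    (hh : ∀ y ∉ B, h y = 0) :
    ∑' y, killedTransition G B x y * h y =
      (G.degree x : ℝ≥0∞)⁻¹ * ∑ y ∈ G.neighborFinset x, h y := by
  rw [tsum_eq_sum (s := G.neighborFinset x), Finset.mul_sum]
  · refine Finset.sum_congr rfl fun y hy => ?_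
    by_cases hyB : y ∈ B
    · have hxy : x ∈ B ∧ G.Adj x y ∧ y ∈ B := ⟨hx, by simpa using hy, hyB⟩
      simp only [killedTransition, killedStep, if_pos hxy]
    · rw [hh y hyB, mul_zero, mul_zero]
  · intro y hy
    have hxy : ¬G.Adj x y := by simpa using hy
    simp [killedTransition, killedStep, hxy]

theorem stepProb_killedTransition_of_notMem {x y : V} (hx : x ∈ B) (hy : y ∉ B) (n : ℕ) :
    stepProb (killedTransition G B) n y x = 0 := by
  cases n with
  | zero => exact if_neg fun h : y = x => hy (h ▸ hx)
  | succ n => simp [stepProb, killedTransition, killedStep, hy]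

theorem tsum_killedTransition_le_one (x : V) : ∑' y, killedTransition G B x y ≤ 1 := by
  calc ∑' y, killedTransition G B x y
      ≤ ∑' y, if y ∈ G.neighborFinset x then (G.degree x : ℝ≥0∞)⁻¹ else 0 := by
        refine ENNReal.tsum_le_tsum fun y => ?_
        by_cases h : G.Adj x y
        · rw [if_pos (by simpa using h)]
          simp only [killedTransition, killedStep]
          split_ifs <;> simp
        · simp [killedTransition, killedStep, h]
    _ = G.degree x * (G.degree x : ℝ≥0∞)⁻¹ := by
        rw [tsum_eq_sum (s := G.neighborFinset x) fun y hy => if_neg hy,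
          Finset.sum_congr rfl fun y hy => if_pos hy]
        simp
    _ ≤ 1 := ENNReal.mul_inv_le_one _

theorem stepProb_killedTransition_ne_top (n : ℕ) (x y : V) :
    stepProb (killedTransition G B) n x y ≠ ⊤ :=
  ne_top_of_le_ne_top ENNReal.one_ne_top (stepProb_le_one tsum_killedTransition_le_one n x y)

theorem finite_setOf_stepProb_killedTransition_ne_zero (n : ℕ) (x : V) :
    {y | stepProb (killedTransition G B) n y x ≠ 0}.Finite := by
  induction n with
  | zero => exact (Set.finite_singleton x).subset fun y hy => by simpa [stepProb] using hy
  | succ n ih =>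
    refine (ih.biUnion fun z _ => (G.neighborFinset z).finite_toSet).subset fun y hy => ?_
    obtain ⟨z, hz⟩ : ∃ z, killedTransition G B y z * stepProb (killedTransition G B) n z x ≠ 0 := by
      simpa only [Set.mem_ofPred_eq, stepProb, ne_eq, ENNReal.tsum_eq_zero, not_forall] using hy
    have h_adj : G.Adj y z := by
      by_contra h
      simp [killedTransition, killedStep, h] at hz
    exact Set.mem_biUnion (right_ne_zero_of_mul hz) (by simpa using h_adj.symm)

theorem degree_mul_toReal_stepProb_succ {x y : V} (hx : x ∈ B) (hy : y ∈ B) (n : ℕ) :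
    G.degree y * (stepProb (killedTransition G B) (n + 1) y x).toReal =
      ∑ z ∈ G.neighborFinset y, (stepProb (killedTransition G B) n z x).toReal := by
  rw [stepProb, tsum_killedTransition_mul_eq hy fun z hz =>
      stepProb_killedTransition_of_notMem hx hz n, ENNReal.toReal_mul,
    ENNReal.toReal_sum fun z _ => stepProb_killedTransition_ne_top n z x, ENNReal.toReal_inv,
    ENNReal.toReal_natCast]
  by_cases h : G.degree y = 0
  · have h_empty : G.neighborFinset y = ∅ := Finset.card_eq_zero.1 h
    simp [h, h_empty]
  · field_simp

variable (G B) in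
/-- Expected number of visits to `x` up to time `N` of the killed walk, as a function of its
starting point. -/
def truncatedGreen (N : ℕ) (x y : V) : ℝ :=
  ∑ n ∈ Finset.range (N + 1), (stepProb (killedTransition G B) n y x).toReal

theorem truncatedGreen_nonneg (N : ℕ) (x : V) : 0 ≤ truncatedGreen G B N x :=
  fun _ => Finset.sum_nonneg fun _ _ => ENNReal.toReal_nonneg

theorem truncatedGreen_self_pos (N : ℕ) (x : V) : 0 < truncatedGreen G B N x x := by
  refine Finset.sum_pos' (fun _ _ => ENNReal.toReal_nonneg) ⟨0, by simp, ?_⟩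
  simp [stepProb]

theorem truncatedGreen_of_notMem {x y : V} (hx : x ∈ B) (hy : y ∉ B) (N : ℕ) :
    truncatedGreen G B N x y = 0 :=
  Finset.sum_eq_zero fun n _ => by
    rw [stepProb_killedTransition_of_notMem hx hy, ENNReal.toReal_zero]

theorem finite_support_truncatedGreen (N : ℕ) (x : V) :
    (truncatedGreen G B N x).support.Finite := by
  refine ((Finset.range (N + 1)).finite_toSet.biUnion fun n _ =>
    finite_setOf_stepProb_killedTransition_ne_zero (G := G) (B := B) n x).subset fun y hy => ?_
  obtain ⟨n, hn, hne⟩ := Finset.exists_ne_zero_of_sum_ne_zero hy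
  exact Set.mem_biUnion hn fun h => hne (by simp [h])

theorem graphLaplacian_truncatedGreen_le {x y : V} (hx : x ∈ B) (hy : y ∈ B) (N : ℕ) :
    graphLaplacian G (truncatedGreen G B N x) y ≤ if y = x then (G.degree x : ℝ) else 0 := by
  set p : ℕ → V → ℝ := fun n z => (stepProb (killedTransition G B) n z x).toReal
  calc graphLaplacian G (truncatedGreen G B N x) y
      = ∑ n ∈ Finset.range (N + 1), (G.degree y * p n y - G.degree y * p (n + 1) y) := by
        simp only [graphLaplacian_eq_degree_mul_sub, truncatedGreen, p,
          degree_mul_toReal_stepProb_succ hx hy]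
        rw [Finset.sum_comm, Finset.mul_sum, Finset.sum_sub_distrib]
    _ = G.degree y * p 0 y - G.degree y * p (N + 1) y :=
        Finset.sum_range_sub' (fun n => G.degree y * p n y) (N + 1)
    _ ≤ G.degree y * p 0 y := sub_le_self _ (by positivity)
    _ = if y = x then (G.degree x : ℝ) else 0 := by
        rcases eq_or_ne y x with rfl | h <;> simp [p, stepProb, *]

theorem tsum_stepProb_self_le_degree_mul_effRes {x : V} (hx : x ∈ B) (hdeg : 0 < G.degree x) :
    ∑' n, stepProb (killedTransition G B) n x x ≤ G.degree x * effRes G {x} Bᶜ := by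
  rw [ENNReal.tsum_eq_iSup_nat]
  refine iSup_le fun N => ?_
  have h_res := div_le_effRes_of_graphLaplacian_le G (finite_support_truncatedGreen (B := B) N x)
    (truncatedGreen_nonneg N x) (truncatedGreen_self_pos N x)
    (fun y hy => truncatedGreen_of_notMem hx hy N) (Nat.cast_pos.2 hdeg) fun y hy =>
      have hyB : y ∈ B := of_not_not fun h => hy (truncatedGreen_of_notMem hx h N)
      graphLaplacian_truncatedGreen_le hx hyB N
  rw [ENNReal.ofReal_div_of_pos (Nat.cast_pos.2 hdeg), ENNReal.ofReal_natCast,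
    ENNReal.div_le_iff' (by simpa using hdeg.ne') (by simp)] at h_res
  calc ∑ n ∈ Finset.range N, stepProb (killedTransition G B) n x x
      ≤ ∑ n ∈ Finset.range (N + 1), stepProb (killedTransition G B) n x x := by gcongr; simp
    _ = ENNReal.ofReal (truncatedGreen G B N x x) := by
        simp only [truncatedGreen, ENNReal.ofReal_sum_of_nonneg fun _ _ => ENNReal.toReal_nonneg,
          ENNReal.ofReal_toReal (stepProb_killedTransition_ne_top _ _ _)]
    _ ≤ G.degree x * effRes G {x} Bᶜ := h_res

end KilledWalk

section Collisions

variable {G : SimpleGraph V} [G.LocallyFinite] {B : Set V}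

theorem IsKilledPairLaw.isChainLaw {a b : V} {ν : Measure (ℕ → Option V × Option V)}
    (hν : IsKilledPairLaw G B a b ν) :
    IsChainLaw (prodStep (killedStep G B) (killedStep G B)) (some a, some b) ν := by
  intro n w
  rw [hν.2]
  simp only [killedCylProb, prodStep, Finset.prod_mul_distrib, Prod.ext_iff, mul_mul_mul_comm,
    ite_zero_mul_ite_zero, mul_one]

/-- The states of the pair of walks at which a collision takes place. -/
def collisionStates (B : Set V) : Set (Option V × Option V) := (fun x => (some x, some x)) '' B

theorem collisions_eq_visits (B : Set V) (ω : ℕ → Option V × Option V) :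
    collisions B ω = visits (collisionStates B) ω := by
  refine tsum_congr fun n => ?_
  simp [Set.indicator_apply, collisionStates, Prod.ext_iff, eq_comm]

variable (G) in
theorem expectedVisits_collisionStates (x : V) :
    expectedVisits (prodStep (killedStep G B) (killedStep G B)) (collisionStates B)
      (some x, some x) = ∑' n, ∑' y : B, stepProb (killedTransition G B) n x y ^ 2 := by
  have h_inj : Function.Injective fun x : V => (some x, some x) := fun x y h => by simpa using h
  refine tsum_congr fun n => ?_
  rw [collisionStates, tsum_image _ h_inj.injOn]
  simp only [stepProb_prodStep, stepProb_killedStep_some, sq]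

theorem expectedVisits_collisionStates_le {d : ℕ} (hdeg : ∀ y ∈ B, G.degree y ≤ d) {x : V}
    (hx : x ∈ B) (hpos : 0 < G.degree x) :
    expectedVisits (prodStep (killedStep G B) (killedStep G B)) (collisionStates B)
      (some x, some x) ≤ d * effRes G {x} Bᶜ := by
  have h_cancel : (G.degree x : ℝ≥0∞) ≠ 0 := by simpa using hpos.ne'
  rw [← ENNReal.mul_le_mul_iff_right h_cancel (ENNReal.natCast_ne_top _),
    expectedVisits_collisionStates, ← ENNReal.tsum_mul_left]
  calc ∑' n, G.degree x * ∑' y : B, stepProb (killedTransition G B) n x y ^ 2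
      ≤ ∑' n, d * stepProb (killedTransition G B) (n + n) x x := by
        refine ENNReal.tsum_le_tsum fun n => ?_
        exact mul_tsum_stepProb_sq_le_of_reversible (m := fun y => (G.degree y : ℝ≥0∞))
          (degree_mul_killedTransition_comm G B) (fun y hy => Nat.cast_le.2 (hdeg y hy)) n x
    _ ≤ ∑' n, d * stepProb (killedTransition G B) n x x :=
        ENNReal.tsum_comp_le_tsum_of_injective (fun m n (h : m + m = n + n) => by lia) _
    _ ≤ d * (G.degree x * effRes G {x} Bᶜ) := by
        rw [ENNReal.tsum_mul_left]
        gcongr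
        exact tsum_stepProb_self_le_degree_mul_effRes hx hpos
    _ = G.degree x * (d * effRes G {x} Bᶜ) := mul_left_comm _ _ _

end Collisions

theorem second_moment_resistance_bound_general [Countable V] (G : SimpleGraph V)
    [G.LocallyFinite] {B : Set V} {d : ℕ} (hpos : ∀ x ∈ B, 0 < G.degree x)
    (hdeg : ∀ x ∈ B, G.degree x ≤ d) {o : V} (hoB : o ∈ B)
    {ν : Measure (ℕ → Option V × Option V)} (hν : IsKilledPairLaw G B o o ν) :
    ∫⁻ ω, collisions B ω ^ 2 ∂ν ≤
      2 * d ^ 2 * effRes G {o} Bᶜ * ⨆ x ∈ B, effRes G {x} Bᶜ := by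
  have : MeasurableSingletonClass (Option V) := ⟨fun _ => trivial⟩
  have h_visits {x : V} (hx : x ∈ B) := expectedVisits_collisionStates_le hdeg hx (hpos x hx)
  calc ∫⁻ ω, collisions B ω ^ 2 ∂ν
      = ∫⁻ ω, visits (collisionStates B) ω ^ 2 ∂ν := by simp only [collisions_eq_visits]
    _ ≤ 2 * (d * effRes G {o} Bᶜ * ⨆ x ∈ B, d * effRes G {x} Bᶜ) := by
        refine (hν.isChainLaw.lintegral_visits_sq_le _).trans ?_
        simp only [collisionStates, iSup_image]
        gcongr 2 * (?_ * ⨆ x, ⨆ hx, ?_)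
        · exact h_visits hoB
        · exact h_visits ‹_›
    _ = 2 * d ^ 2 * effRes G {o} Bᶜ * ⨆ x ∈ B, effRes G {x} Bᶜ := by
        simp only [← ENNReal.mul_iSup]
        ring

/-- If every vertex of `G` has degree at most `6`, then the
second moment of the number of collisions of two independent simple random walks
on `G` killed upon exiting `B`, both started at `0`, satisfies
`E₀₀(Z_B²) ≤ 6 R_eff(0,V∖B) + 72 R_eff(0,V∖B) · max_{x∈B} R_eff(x,V∖B)`. -/
theorem second_moment_resistance_bound
    (G : SimpleGraph V) [G.LocallyFinite] (hconn : G.Connected) (hnt : Nontrivial V)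
    (hdeg : ∀ x : V, G.degree x ≤ 6)
    (o : V) (B : Set V) (hB : B.Finite) (hoB : o ∈ B) (hBV : B ≠ Set.univ)
    (ν : Measure (ℕ → Option V × Option V)) (hν : IsKilledPairLaw G B o o ν) :
    ∫⁻ ω, (collisions B ω) ^ 2 ∂ν ≤
      6 * effRes G {o} Bᶜ +
        72 * effRes G {o} Bᶜ * ⨆ x ∈ B, effRes G {x} Bᶜ := by
  have := countable_of_connected G hconn
  calc ∫⁻ ω, collisions B ω ^ 2 ∂ν
      ≤ 2 * (6 : ℕ) ^ 2 * effRes G {o} Bᶜ * ⨆ x ∈ B, effRes G {x} Bᶜ :=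
        second_moment_resistance_bound_general G
          (fun x _ => hconn.preconnected.degree_pos_of_nontrivial x) (fun x _ => hdeg x) hoB hν
    _ = 72 * effRes G {o} Bᶜ * ⨆ x ∈ B, effRes G {x} Bᶜ := by norm_num
    _ ≤ 6 * effRes G {o} Bᶜ + 72 * effRes G {o} Bᶜ * ⨆ x ∈ B, effRes G {x} Bᶜ := le_add_self

end
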